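/- For every integer ℓ ≥ 2 and every finite graph G with weighting w such that G does not contain the ℓ-fan F_ℓ as an induced minor, there is a w-balanced separator of G dominated by at most ℓ vertices, i.e., a set S ⊆ N[D] for some D ⊆ V(G) with |D| ≤ ℓ such that every component of G - S has total weight at most w(V(G))/2. -/

import Mathlib

open SimpleGraph

variable {V : Type}

/-- `u` and `v` are connected by a walk in `G` avoiding `S`
(i.e., they lie in the same component of `G - S`). -/
def ReachOutside (G : SimpleGraph V) (S : Set V) (u v : V) : Prop :=
  ∃ p : G.Walk u v, ∀ x ∈ p.support, x ∉ S

/-- Total weight of a vertex set. -/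
noncomputable def setWeight [Finite V] (w : V → ℝ) (A : Set V) : ℝ :=
  ∑ v ∈ (Set.toFinite A).toFinset, w v

/-- `S` is a `w`-balanced separator of `G`: every component of `G - S`
has weight at most half the total weight. -/
def IsBalancedSep [Finite V] (G : SimpleGraph V) (w : V → ℝ) (S : Set V) : Prop :=
  ∀ v, v ∉ S → setWeight w {u | ReachOutside G S u v} ≤ setWeight w (Set.univ : Set V) / 2

/-- Closed neighbourhood `N[A]` of a vertex set. -/
def closedNbhd (G : SimpleGraph V) (A : Set V) : Set V :=
  A ∪ {x | ∃ a ∈ A, G.Adj a x}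

/-- `S` separates `A` from `B` in `G`: every walk from `A` to `B` meets `S`. -/
def Separates (G : SimpleGraph V) (S A B : Set V) : Prop :=
  ∀ a ∈ A, ∀ b ∈ B, ∀ p : G.Walk a b, ∃ x ∈ p.support, x ∈ S

/-- `C` is (the vertex set of) an induced cycle of `G`: the induced subgraph is
connected and every vertex of `C` has exactly two neighbours in `C`. -/
def IsInducedCycle (G : SimpleGraph V) (C : Set V) : Prop :=
  (G.induce C).Connected ∧ ∀ x ∈ C, (G.neighborSet x ∩ C).ncard = 2

/-- `H` is an induced minor of `G`. -/
def IsInducedMinor {W : Type} (H : SimpleGraph W) (G : SimpleGraph V) : Prop :=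
  ∃ X : W → Set V,
    (∀ a, (G.induce (X a)).Connected) ∧
    (Pairwise fun a b => Disjoint (X a) (X b)) ∧
    ∀ a b, a ≠ b → ((∃ u ∈ X a, ∃ v ∈ X b, G.Adj u v) ↔ H.Adj a b)

/-- `H` is a minor of `G`. -/
def IsMinor {W : Type} (H : SimpleGraph W) (G : SimpleGraph V) : Prop :=
  ∃ X : W → Set V,
    (∀ a, (G.induce (X a)).Connected) ∧
    (Pairwise fun a b => Disjoint (X a) (X b)) ∧
    ∀ a b, H.Adj a b → ∃ u ∈ X a, ∃ v ∈ X b, G.Adj u v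

/-- The `ℓ`-wheel: a cycle of length `ℓ` plus a universal vertex (`none`). -/
def wheel (ℓ : ℕ) : SimpleGraph (Option (ZMod ℓ)) :=
  SimpleGraph.fromRel fun a b =>
    a = none ∨ b = none ∨ ∃ i : ZMod ℓ, a = some i ∧ b = some (i + 1)

/-- The `ℓ`-fan: a path on `ℓ` vertices plus a universal vertex (`none`). -/
def fan (ℓ : ℕ) : SimpleGraph (Option (Fin ℓ)) :=
  SimpleGraph.fromRel fun a b =>
    a = none ∨ b = none ∨ ∃ i j : Fin ℓ, a = some i ∧ b = some j ∧ (j : ℕ) = (i : ℕ) + 1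

section helpers

lemma setWeight_mono [Finite V] (w : V → ℝ) (hw0 : ∀ v, 0 ≤ w v) {A B : Set V} (h : A ⊆ B) :
    setWeight w A ≤ setWeight w B := by
  unfold setWeight
  apply Finset.sum_le_sum_of_subset_of_nonneg
  · intro x hx
    simp only [Set.Finite.mem_toFinset] at hx ⊢
    exact h hx
  · intro i _ _
    exact hw0 i

lemma setWeight_disj [Finite V] (w : V → ℝ) (hw0 : ∀ v, 0 ≤ w v) {A B : Set V}
    (h : ∀ x ∈ A, x ∉ B) :
    setWeight w A + setWeight w B ≤ setWeight w Set.univ := by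
  classical
  unfold setWeight
  rw [← Finset.sum_union]
  · apply Finset.sum_le_sum_of_subset_of_nonneg
    · intro x hx
      simp
    · intro i _ _
      exact hw0 i
  · rw [Finset.disjoint_left]
    intro x hx
    simp only [Set.Finite.mem_toFinset] at hx ⊢
    exact h x hx

/-- `C` is a connected component of `G - T`. -/
structure IsComp (G : SimpleGraph V) (T C : Set V) : Prop where
  conn : (G.induce C).Connected
  avoid : ∀ x ∈ C, x ∉ T
  closed : ∀ x ∈ C, ∀ y, G.Adj x y → y ∉ T → y ∈ C

lemma isComp_reach (G : SimpleGraph V) (T : Set V) (v : V) (hv : v ∉ T) :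
    IsComp G T {u | ReachOutside G T u v} := by
  refine ⟨?_, ?_, ?_⟩
  · apply G.induce_connected_of_patches v
    · exact ⟨Walk.nil, by simpa using hv⟩
    · rintro x ⟨p, hp⟩
      refine ⟨{y | y ∈ p.support}, ?_, p.end_mem_support, p.start_mem_support,
        p.connected_induce_support _ _⟩
      classical
      intro y hy
      refine ⟨p.dropUntil y hy, ?_⟩
      intro z hz
      exact hp z (p.support_dropUntil_subset_support hy hz)
  · rintro x ⟨p, hp⟩
    exact hp x p.start_mem_support
  · rintro x ⟨p, hp⟩ y hxy hy
    refine ⟨Walk.cons hxy.symm p, ?_⟩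
    intro z hz
    rw [Walk.support_cons, List.mem_cons] at hz
    rcases hz with rfl | hz
    · exact hy
    · exact hp z hz

lemma conn_edge {G : SimpleGraph V} {C A : Set V} (hC : (G.induce C).Connected) {a b : V}
    (ha : a ∈ C) (hb : b ∈ C) (haA : a ∈ A) (hbA : b ∉ A) :
    ∃ x ∈ C, ∃ y ∈ C, x ∈ A ∧ y ∉ A ∧ G.Adj x y := by
  obtain ⟨p⟩ := hC.preconnected ⟨a, ha⟩ ⟨b, hb⟩
  obtain ⟨d, _, h1, h2⟩ := p.exists_boundary_dart {x | x.1 ∈ A} haA hbA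
  exact ⟨d.fst, d.fst.2, d.snd, d.snd.2, h1, h2, d.adj⟩

/-- Walks ending in `C` and avoiding the boundary of `C` stay in `C`. -/
lemma walk_stays {G : SimpleGraph V} {S C : Set V}
    (hS : ∀ x ∈ C, ∀ y, G.Adj x y → y ∉ C → y ∈ S) {u v : V} (p : G.Walk u v)
    (hp : ∀ x ∈ p.support, x ∉ S) (hv : v ∈ C) : ∀ x ∈ p.support, x ∈ C := by
  induction p with
  | nil => simpa using hv
  | cons h p ih =>
    have ih' := ih (fun x hx => hp x (by simp [hx])) hv
    intro x hx
    rw [Walk.support_cons, List.mem_cons] at hx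
    rcases hx with rfl | hx
    · by_contra hxC
      exact hp x (by simp) (hS _ (ih' _ p.start_mem_support) _ h.symm hxC)
    · exact ih' x hx

lemma comp_mono {G : SimpleGraph V} {T T' C C' : Set V} (hT : T ⊆ T')
    (hC : IsComp G T C) (hC' : IsComp G T' C') {a : V} (ha : a ∈ C) (ha' : a ∈ C') :
    C' ⊆ C := by
  intro b hb
  by_contra hbC
  obtain ⟨x, hx, y, hy, hxC, hyC, hxy⟩ := conn_edge hC'.conn ha' hb ha hbC
  exact hyC (hC.closed x hxC y hxy (fun h => hC'.avoid y hy (hT h)))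

lemma hub_conn {G : SimpleGraph V} {C : Set V} (hC : (G.induce C).Connected) :
    (G.induce (closedNbhd G C)).Connected := by
  obtain ⟨⟨c, hc⟩⟩ := hC.nonempty
  apply G.induce_connected_of_patches c (Or.inl hc)
  intro v hv
  rcases hv with hv | ⟨a, ha, hav⟩
  · exact ⟨C, Set.subset_union_left, hc, hv, hC.preconnected _ _⟩
  · refine ⟨C ∪ {a, v}, ?_, Or.inl hc, Or.inr (by simp), ?_⟩
    · apply Set.union_subset Set.subset_union_left
      rintro x (rfl | rfl)
      · exact Or.inl ha
      · exact Or.inr ⟨a, ha, hav⟩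
    · exact (induce_union_connected hC.preconnected
        (induce_pair_connected_of_adj hav).preconnected ⟨a, ha, by simp⟩).preconnected _ _

lemma icc_conn {G : SimpleGraph V} (f : ℕ → V) (a d : ℕ)
    (h : ∀ i, a ≤ i → i < a + d → G.Adj (f i) (f (i + 1))) :
    (G.induce (f '' Set.Icc a (a + d))).Connected := by
  induction d with
  | zero =>
    have : f '' Set.Icc a (a + 0) = {f a} := by simp
    rw [this]
    apply G.induce_connected_of_patches (f a) (Set.mem_singleton _)
    rintro v rfl
    exact ⟨{f a}, le_rfl, Set.mem_singleton _, Set.mem_singleton _, Reachable.refl _⟩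
  | succ d ih =>
    have e : f '' Set.Icc a (a + (d + 1)) = f '' Set.Icc a (a + d) ∪ {f (a + d), f (a + d + 1)} := by
      ext x
      constructor
      · rintro ⟨i, ⟨h1, h2⟩, rfl⟩
        rcases Nat.lt_or_ge (a + d) i with h3 | h3
        · right
          right
          have : i = a + d + 1 := by omega
          rw [this]; rfl
        · exact Or.inl ⟨i, ⟨h1, h3⟩, rfl⟩
      · rintro (⟨i, ⟨h1, h2⟩, rfl⟩ | rfl | rfl)
        · exact ⟨i, ⟨h1, by omega⟩, rfl⟩
        · exact ⟨a + d, ⟨by omega, by omega⟩, rfl⟩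
        · exact ⟨a + d + 1, ⟨by omega, by omega⟩, rfl⟩
    rw [e]
    exact induce_union_connected (ih (fun i h1 h2 => h i h1 (by omega))).preconnected
      (induce_pair_connected_of_adj (h (a + d) (by omega) (by omega))).preconnected
      ⟨f (a + d), ⟨a + d, ⟨by omega, le_rfl⟩, rfl⟩, by simp⟩

lemma exists_count (p : ℕ → Prop) [DecidablePred p] (k j : ℕ) (h : j < Nat.count p k) :
    ∃ m < k, p m ∧ Nat.count p m = j := by
  induction k with
  | zero => simp at h
  | succ k ih =>
    rw [Nat.count_succ] at h
    by_cases hj : j < Nat.count p k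
    · obtain ⟨m, h1, h2⟩ := ih hj
      exact ⟨m, by omega, h2⟩
    · split_ifs at h with hp
      · exact ⟨k, by omega, hp, by omega⟩
      · omega

lemma fan_build {G : SimpleGraph V} {C : Set V} (f : ℕ → V) (k ℓ : ℕ)
    (hf : ∀ i j, i < j → j < k → (G.Adj (f i) (f j) ↔ j = i + 1) ∧ f i ≠ f j)
    (hC : (G.induce C).Connected) (hdis : ∀ i < k, f i ∉ closedNbhd G C)
    (p : ℕ → Prop) [DecidablePred p]
    (hp : ∀ i < k, p i → ∃ x ∈ closedNbhd G C, G.Adj (f i) x)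
    (hk : ℓ ≤ Nat.count p k) : IsInducedMinor (fan ℓ) G := by
  let B : ℕ → Set V := fun j => {x | ∃ m < k, Nat.count p (m + 1) = j + 1 ∧ f m = x}
  have hinj : ∀ i < k, ∀ j < k, f i = f j → i = j := by
    intro i hi j hj e
    rcases lt_trichotomy i j with h | h | h
    · exact absurd e (hf i j h hj).2
    · exact h
    · exact absurd e.symm (hf j i h hi).2
  have hB : ∀ j < ℓ, ∃ m < k, p m ∧ Nat.count p m = j := fun j hj =>
    exists_count p k j (by omega)
  have hBc : ∀ j < ℓ, (G.induce (B j)).Connected := by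
    intro j hj
    obtain ⟨m, hm, hpm, hcm⟩ := hB j hj
    have hm1 : Nat.count p (m + 1) = j + 1 := by rw [Nat.count_succ, if_pos hpm, hcm]
    have hmB : f m ∈ B j := ⟨m, hm, hm1, rfl⟩
    apply G.induce_connected_of_patches (f m) hmB
    rintro _ ⟨n, hn, hcn, rfl⟩
    have key : ∀ a d, a + d < k → Nat.count p (a + 1) = j + 1 → Nat.count p (a + d + 1) = j + 1 →
        f '' Set.Icc a (a + d) ⊆ B j ∧ (G.induce (f '' Set.Icc a (a + d))).Connected := by
      intro a d h1 h2 h3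
      constructor
      · rintro _ ⟨i, ⟨h4, h5⟩, rfl⟩
        refine ⟨i, by omega, ?_, rfl⟩
        have := Nat.count_monotone p (show a + 1 ≤ i + 1 by omega)
        have := Nat.count_monotone p (show i + 1 ≤ a + d + 1 by omega)
        omega
      · apply icc_conn
        intro i h4 h5
        exact ((hf i (i + 1) (by omega) (by omega)).1).2 rfl
    rcases le_total m n with h | h
    · obtain ⟨d, rfl⟩ := Nat.exists_eq_add_of_le h
      obtain ⟨h1, h2⟩ := key m d hn hm1 hcn
      exact ⟨_, h1, ⟨m, ⟨by omega, by omega⟩, rfl⟩, ⟨_, ⟨by omega, by omega⟩, rfl⟩,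
        h2.preconnected _ _⟩
    · obtain ⟨d, rfl⟩ := Nat.exists_eq_add_of_le h
      obtain ⟨h1, h2⟩ := key n d hm hcn hm1
      exact ⟨_, h1, ⟨_, ⟨by omega, by omega⟩, rfl⟩, ⟨_, ⟨by omega, by omega⟩, rfl⟩,
        h2.preconnected _ _⟩
  have hBd : ∀ i j x, x ∈ B i → x ∈ B j → i = j := by
    rintro i j _ ⟨m, hm, hcm, rfl⟩ ⟨n, hn, hcn, e⟩
    have := hinj n hn m hm e
    subst this
    omega
  have hBh : ∀ j x, x ∈ B j → x ∉ closedNbhd G C := by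
    rintro j _ ⟨m, hm, _, rfl⟩
    exact hdis m hm
  have hBhub : ∀ j < ℓ, ∃ u ∈ B j, ∃ v ∈ closedNbhd G C, G.Adj u v := by
    intro j hj
    obtain ⟨m, hm, hpm, hcm⟩ := hB j hj
    obtain ⟨x, hx, hxa⟩ := hp m hm hpm
    exact ⟨f m, ⟨m, hm, by rw [Nat.count_succ, if_pos hpm, hcm], rfl⟩, x, hx, hxa⟩
  have hBs : ∀ j, j + 1 < ℓ → ∃ u ∈ B j, ∃ v ∈ B (j + 1), G.Adj u v := by
    intro j hj
    obtain ⟨m, hm, hpm, hcm⟩ := hB (j + 1) hj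
    obtain _ | m := m
    · simp at hcm
    · exact ⟨f m, ⟨m, by omega, hcm, rfl⟩, f (m + 1),
        ⟨m + 1, hm, by rw [Nat.count_succ, if_pos hpm, hcm], rfl⟩,
        ((hf m (m + 1) (by omega) hm).1).2 rfl⟩
  have hBa : ∀ i j u v, u ∈ B i → v ∈ B j → G.Adj u v → i ≠ j → j = i + 1 ∨ i = j + 1 := by
    rintro i j _ _ ⟨m, hm, hcm, rfl⟩ ⟨n, hn, hcn, rfl⟩ hadj hij
    rcases lt_trichotomy m n with h | h | h
    · have := ((hf m n h hn).1).1 hadj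
      subst this
      rw [Nat.count_succ] at hcn
      split_ifs at hcn <;> omega
    · subst h
      omega
    · have := ((hf n m h hm).1).1 hadj.symm
      subst this
      rw [Nat.count_succ] at hcm
      split_ifs at hcm <;> omega
  refine ⟨fun a => match a with
    | none => closedNbhd G C
    | some i => B i, ?_, ?_, ?_⟩
  · rintro (_ | i)
    · exact hub_conn hC
    · exact hBc i i.2
  · rintro (_ | i) (_ | j) hab
    · exact absurd rfl hab
    · exact Set.disjoint_left.2 fun x hx hx' => hBh _ _ hx' hx
    · exact Set.disjoint_left.2 fun x hx hx' => hBh _ _ hx hx'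
    · exact Set.disjoint_left.2 fun x hx hx' => hab (by rw [Fin.ext (hBd _ _ _ hx hx')])
  · rintro (_ | i) (_ | j) hab
    · exact absurd rfl hab
    · constructor
      · intro _
        simp [fan]
      · intro _
        obtain ⟨u, hu, v, hv, h⟩ := hBhub j j.2
        exact ⟨v, hv, u, hu, h.symm⟩
    · constructor
      · intro _
        simp [fan]
      · intro _
        exact hBhub i i.2
    · constructor
      · rintro ⟨u, hu, v, hv, h⟩
        have hne : (i : ℕ) ≠ j := fun e => hab (by rw [Fin.ext e])
        have := hBa i j u v hu hv h hne
        simp only [fan, SimpleGraph.fromRel_adj]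
        refine ⟨hab, ?_⟩
        rcases this with h | h
        · exact Or.inl (Or.inr (Or.inr ⟨i, j, rfl, rfl, h⟩))
        · exact Or.inr (Or.inr (Or.inr ⟨j, i, rfl, rfl, h⟩))
      · intro h
        simp only [fan, SimpleGraph.fromRel_adj] at h
        obtain ⟨_, h⟩ := h
        rcases h with (h | h | ⟨i', j', h1, h2, h⟩) | (h | h | ⟨i', j', h1, h2, h⟩)
        · cases h
        · cases h
        · cases h1
          cases h2
          have := hBs i (h ▸ j.2)
          rw [← h] at this
          exact this
        · cases h
        · cases h
        · cases h1
          cases h2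
          have := hBs j (h ▸ i.2)
          rw [← h] at this
          obtain ⟨u, hu, v, hv, h⟩ := this
          exact ⟨v, hv, u, hu, h.symm⟩

lemma closedNbhd_mono (G : SimpleGraph V) {A B : Set V} (h : A ⊆ B) :
    closedNbhd G A ⊆ closedNbhd G B := by
  rintro x (hx | ⟨a, ha, hax⟩)
  · exact Or.inl (h hx)
  · exact Or.inr ⟨a, h ha, hax⟩

lemma exists_heavy [Finite V] (G : SimpleGraph V) (w : V → ℝ) (T : Set V)
    (h : ¬ IsBalancedSep G w T) :
    ∃ C, IsComp G T C ∧ setWeight w Set.univ / 2 < setWeight w C := by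
  unfold IsBalancedSep at h
  push Not at h
  obtain ⟨v, hv, hw⟩ := h
  exact ⟨_, isComp_reach G T v hv, hw⟩

lemma main_ind [Finite V] (G : SimpleGraph V) (ℓ : ℕ) (hℓ : 2 ≤ ℓ)
    (hfree : ¬ IsInducedMinor (fan ℓ) G)
    (w : V → ℝ) (hw0 : ∀ v, 0 ≤ w v) (n : ℕ) : ∀ (f : ℕ → V) (k : ℕ) (C : Set V),
    C.ncard ≤ n →
    (∀ i j, i < j → j < k + 1 → (G.Adj (f i) (f j) ↔ j = i + 1) ∧ f i ≠ f j) →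
    IsComp G (closedNbhd G (f '' Set.Iio k)) C →
    setWeight w Set.univ / 2 < setWeight w C →
    (∃ c ∈ C, c ∈ closedNbhd G {f k}) →
    ∃ S D : Set V, D.ncard ≤ ℓ ∧ S ⊆ closedNbhd G D ∧ IsBalancedSep G w S := by
  classical
  induction n with
  | zero =>
    rintro f k C hn - - - ⟨c, hc, -⟩
    have : C = ∅ := by rwa [Nat.le_zero, Set.ncard_eq_zero] at hn
    simp [this] at hc
  | succ n ih =>
    rintro f k C hn hf hC hw ⟨c, hc, hcf⟩
    have hsub : f '' Set.Iio k ⊆ f '' Set.Iio (k + 1) :=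
      Set.image_mono fun x (hx : x < k) => Nat.lt_succ_of_lt hx
    have hsub1 : {f k} ⊆ f '' Set.Iio (k + 1) := by
      rintro _ rfl
      exact ⟨k, Nat.lt_succ_self k, rfl⟩
    by_cases hbal : IsBalancedSep G w (closedNbhd G (f '' Set.Iio (k + 1)))
    · have hdis : ∀ i < k, f i ∉ closedNbhd G C := by
        rintro i hi (h | ⟨a, ha, hai⟩)
        · exact hC.avoid _ h (Or.inl ⟨i, hi, rfl⟩)
        · exact hC.avoid _ ha (Or.inr ⟨f i, ⟨i, hi, rfl⟩, hai.symm⟩)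
      let p : ℕ → Prop := fun i => ∃ x ∈ closedNbhd G C, G.Adj (f i) x
      have hcount : Nat.count p k < ℓ := by
        by_contra hcon
        exact hfree (fan_build f k ℓ (fun i j h1 h2 => hf i j h1 (by omega)) hC.conn hdis p
          (fun i _ h => h) (by omega))
      let I : Finset ℕ := (Finset.range k).filter p
      refine ⟨(closedNbhd G C \ C) ∪ closedNbhd G {f k}, insert (f k) ((I.image f : Finset V) : Set V),
        ?_, ?_, ?_⟩
      · refine (Set.ncard_insert_le _ _).trans ?_
        rw [Set.ncard_coe_finset]
        have h1 : (I.image f).card ≤ I.card := Finset.card_image_le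
        have h2 : I.card = Nat.count p k := (Nat.count_eq_card_filter_range p k).symm
        omega
      · rintro x (⟨hx, hxC⟩ | hx)
        · rcases hx with hx | ⟨a, ha, hax⟩
          · exact absurd hx hxC
          · have hxT : x ∈ closedNbhd G (f '' Set.Iio k) := by
              by_contra hxT
              exact hxC (hC.closed a ha x hax hxT)
            rcases hxT with ⟨i, hi, rfl⟩ | ⟨_, ⟨i, hi, rfl⟩, hix⟩
            · exact absurd (Or.inr ⟨a, ha, hax⟩) (hdis i hi)
            · refine Or.inr ⟨f i, Or.inr ?_, hix⟩
              rw [Finset.mem_coe]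
              exact Finset.mem_image_of_mem f (Finset.mem_filter.2
                ⟨Finset.mem_range.2 hi, x, Or.inr ⟨a, ha, hax⟩, hix⟩)
        · refine closedNbhd_mono G ?_ hx
          rintro _ rfl
          exact Or.inl rfl
      · intro v hv
        have hS : ∀ x ∈ C, ∀ y, G.Adj x y → y ∉ C →
            y ∈ (closedNbhd G C \ C) ∪ closedNbhd G {f k} :=
          fun x hx y hxy hy => Or.inl ⟨Or.inr ⟨x, hx, hxy⟩, hy⟩
        by_cases hvC : v ∈ C
        · have key : ∀ x ∈ C, x ∉ (closedNbhd G C \ C) ∪ closedNbhd G {f k} →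
              x ∉ closedNbhd G (f '' Set.Iio (k + 1)) := by
            intro x hx hxS hxT
            have : x ∈ closedNbhd G (f '' Set.Iio k) ∨ x ∈ closedNbhd G {f k} := by
              rcases hxT with ⟨i, hi, rfl⟩ | ⟨_, ⟨i, hi, rfl⟩, hix⟩
              · rcases Nat.lt_succ_iff_lt_or_eq.1 hi with h | rfl
                · exact Or.inl (Or.inl ⟨i, h, rfl⟩)
                · exact Or.inr (Or.inl rfl)
              · rcases Nat.lt_succ_iff_lt_or_eq.1 hi with h | rfl
                · exact Or.inl (Or.inr ⟨_, ⟨i, h, rfl⟩, hix⟩)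
                · exact Or.inr (Or.inr ⟨_, rfl, hix⟩)
            rcases this with h | h
            · exact hC.avoid x hx h
            · exact hxS (Or.inr h)
          refine (setWeight_mono w hw0 ?_).trans (hbal v (key v hvC hv))
          rintro u ⟨q, hq⟩
          exact ⟨q, fun x hx => key x (walk_stays hS q hq hvC x hx) (hq x hx)⟩
        · have := setWeight_disj w hw0 (A := {u | ReachOutside G
            ((closedNbhd G C \ C) ∪ closedNbhd G {f k}) u v}) (B := C) (by
              rintro u ⟨q, hq⟩ huC
              refine hvC (walk_stays hS q.reverse ?_ huC v (by simp))
              intro x hx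
              exact hq x (by simpa using hx))
          linarith
    · obtain ⟨C', hC', hw'⟩ := exists_heavy G w _ hbal
      have hmeet : ∃ a ∈ C, a ∈ C' := by
        by_contra hcon
        push Not at hcon
        have := setWeight_disj w hw0 hcon
        linarith
      obtain ⟨a, ha, ha'⟩ := hmeet
      have hCC : C' ⊆ C := comp_mono (closedNbhd_mono G hsub) hC hC' ha ha'
      have hcC' : c ∉ C' := fun h => hC'.avoid c h (closedNbhd_mono G hsub1 hcf)
      obtain ⟨x, hx, y, hy, hxC', hyC', hxy⟩ := conn_edge hC.conn ha hc ha' hcC'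
      have hyT : y ∈ closedNbhd G (f '' Set.Iio (k + 1)) := by
        by_contra hyT
        exact hyC' (hC'.closed x hxC' y hxy hyT)
      have hyn : ∀ i < k, ¬ G.Adj (f i) y ∧ f i ≠ y := by
        intro i hi
        constructor
        · intro h
          exact hC.avoid y hy (Or.inr ⟨f i, ⟨i, hi, rfl⟩, h⟩)
        · rintro rfl
          exact hC.avoid _ hy (Or.inl ⟨i, hi, rfl⟩)
      have hyk : f k ≠ y := by
        rintro rfl
        exact hC'.avoid x hxC' (Or.inr ⟨f k, ⟨k, Nat.lt_succ_self k, rfl⟩, hxy.symm⟩)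
      have hky : G.Adj (f k) y := by
        rcases hyT with ⟨i, hi, rfl⟩ | ⟨_, ⟨i, hi, rfl⟩, hix⟩
        · rcases Nat.lt_succ_iff_lt_or_eq.1 hi with h | rfl
          · exact absurd rfl (hyn i h).2
          · exact absurd rfl hyk
        · rcases Nat.lt_succ_iff_lt_or_eq.1 hi with h | rfl
          · exact absurd hix (hyn i h).1
          · exact hix
      let g : ℕ → V := fun i => if i < k + 1 then f i else y
      have hg : ∀ i, i < k + 1 → g i = f i := fun i hi => if_pos hi
      have hgk : g (k + 1) = y := if_neg (lt_irrefl _)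
      have himg : g '' Set.Iio (k + 1) = f '' Set.Iio (k + 1) :=
        Set.image_congr fun i hi => hg i hi
      refine ih g (k + 1) C' ?_ ?_ (himg ▸ hC') hw' ⟨x, hxC', ?_⟩
      · have : C'.ncard < C.ncard :=
          Set.ncard_lt_ncard ⟨hCC, fun h => hcC' (h hc)⟩ (Set.toFinite _)
        omega
      · intro i j hij hj
        rw [hg i (by omega)]
        rcases Nat.lt_succ_iff_lt_or_eq.1 hj with h | rfl
        · rw [hg j h]
          exact hf i j hij h
        · rw [hgk]
          rcases Nat.lt_succ_iff_lt_or_eq.1 hij with h | rfl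
          · refine ⟨⟨fun h' => absurd h' (hyn i h).1, fun h' => by omega⟩, (hyn i h).2⟩
          · exact ⟨⟨fun _ => rfl, fun _ => hky⟩, hyk⟩
      · rw [hgk]
        exact Or.inr ⟨y, rfl, hxy.symm⟩

end helpers

/-- fan-induced-minor-free graphs have balanced separators
dominated by at most `ℓ` vertices. -/
theorem fan_free [Finite V] (G : SimpleGraph V) (ℓ : ℕ) (hℓ : 2 ≤ ℓ)
    (hfree : ¬ IsInducedMinor (fan ℓ) G)
    (w : V → ℝ) (hw0 : ∀ v, 0 ≤ w v) :
    ∃ S D : Set V, D.ncard ≤ ℓ ∧ S ⊆ closedNbhd G D ∧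
      IsBalancedSep G w S := by
  by_cases hbal : IsBalancedSep G w ∅
  · exact ⟨∅, ∅, by simp, by simp, hbal⟩
  · obtain ⟨C, hC, hw⟩ := exists_heavy G w _ hbal
    obtain ⟨⟨c, hc⟩⟩ := hC.conn.nonempty
    refine main_ind G ℓ hℓ hfree w hw0 _ (fun _ => c) 0 C le_rfl ?_ ?_ hw ⟨c, hc, Or.inl rfl⟩
    · intro i j h1 h2
      omega
    · have : closedNbhd G ((fun _ : ℕ => c) '' Set.Iio 0) = ∅ := by
        ext x
        simp [closedNbhd]
      rw [this]
      exact hC
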